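/- Let (X,r) be a set-theoretic YBE solution with r(x,y) = (σ_x(y), γ_y(x)), and suppose each σ_x : X → X is bijective. Define F(x,y) := (x, σ_x(y)), Φ(x,y,z) := (x, σ_x(y), σ_{γ_y(x)}(z)), and Ψ(x,y,z) := (x, y, σ_x(σ_y(z))). Then (F,Φ,Ψ) is a Drinfeld twist on (X,r), and the twisted solution is given by (F∘r∘F⁻¹)(x,y) = (y, σ_y(γ_{σ_x⁻¹(y)}(x))). -/

import Mathlib

namespace YBETwist

/-- Apply a map on `X × X` to the factors 1,2 of a triple: `f₁₂ = f × id`. -/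
def E12 {X : Type*} (f : (X × X) ≃ (X × X)) : (X × X × X) ≃ (X × X × X) :=
  ((Equiv.prodAssoc X X X).symm.trans (f.prodCongr (Equiv.refl X))).trans
    (Equiv.prodAssoc X X X)

/-- Apply a map on `X × X` to the factors 2,3 of a triple: `f₂₃ = id × f`. -/
def E23 {X : Type*} (f : (X × X) ≃ (X × X)) : (X × X × X) ≃ (X × X × X) :=
  (Equiv.refl X).prodCongr f

/-- The braid relation `r₂₃ ∘ r₁₂ ∘ r₂₃ = r₁₂ ∘ r₂₃ ∘ r₁₂`; a set-theoretic YBE solution is a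
bijection `r : X² → X²` satisfying it. -/
def IsBraided {X : Type*} (r : (X × X) ≃ (X × X)) : Prop :=
  ∀ p : X × X × X, E23 r (E12 r (E23 r p)) = E12 r (E23 r (E12 r p))

/-- A Drinfeld twist `(F, Φ, Ψ)` on a set-theoretic YBE solution `(X, r)`. -/
structure IsTwist {X : Type*} (r F : (X × X) ≃ (X × X))
    (Φ Ψ : (X × X × X) ≃ (X × X × X)) : Prop where
  t1 : ∀ p, E12 F (Ψ p) = E23 F (Φ p)
  t2 : ∀ p, Φ (E23 r p) = E23 r (Φ p)
  t3 : ∀ p, Ψ (E12 r p) = E12 r (Ψ p)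

/-- The twisted map `F ∘ r ∘ F⁻¹`. -/
def twisted {X : Type*} (r F : (X × X) ≃ (X × X)) : (X × X) ≃ (X × X) :=
  (F.symm.trans r).trans F

theorem sigma_twist {X : Type*} (r F : (X × X) ≃ (X × X))
    (Φ Ψ : (X × X × X) ≃ (X × X × X)) (σ γ τ : X → X → X)
    (hr : ∀ x y, r (x, y) = (σ x y, γ y x))
    (hτ : ∀ x, Function.LeftInverse (τ x) (σ x) ∧ Function.RightInverse (τ x) (σ x))
    (hbr : IsBraided r)
    (hF : ∀ x y, F (x, y) = (x, σ x y))
    (hΦ : ∀ x y z, Φ (x, y, z) = (x, σ x y, σ (γ y x) z))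
    (hΨ : ∀ x y z, Ψ (x, y, z) = (x, y, σ x (σ y z))) :
    IsTwist r F Φ Ψ ∧
    ∀ x y, twisted r F (x, y) = (y, σ y (γ (τ x y) x)) := by
  have braid (x y z : X) := hbr (x, y, z)
  simp only [E12, E23, Equiv.trans_apply, Equiv.prodAssoc_apply, Equiv.prodAssoc_symm_apply,
    Equiv.prodCongr_apply, Equiv.coe_refl, Prod.map_apply, id_eq, hr, Prod.mk.injEq] at braid
  refine ⟨⟨?_, ?_, ?_⟩, fun x y => ?_⟩
  · rintro ⟨x, y, z⟩
    simp [E12, E23, hF, hΦ, hΨ, (braid x y z).1]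
  · rintro ⟨x, y, z⟩
    simp [E23, hr, hΦ, (braid x y z).1, (braid x y z).2.1]
  · rintro ⟨x, y, z⟩
    simp [E12, hr, hΨ, (braid x y z).1]
  · have hστ : σ x (τ x y) = y := (hτ x).2 y
    have hFsymm : F.symm (x, y) = (x, τ x y) := by
      rw [Equiv.symm_apply_eq, hF, hστ]
    simp [twisted, hFsymm, hr, hF, hστ]

end YBETwist
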